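/- For every integer n ≥ 2, the reduced entropies of the Haros graphs of the rational families 2/(2n+1), 3/(3n+2) and 3/(3n+1) satisfy: H(2/(2n+1)) = (2/(2n+1))·ln 2, H(3/(3n+2)) = (3/(3n+2))·ln 3, and H(3/(3n+1)) = (3/(3n+1))·(ln 3 − (2/3)·ln 2). In particular each family lies on a straight line H(x) = a·x through the origin with slope a equal to ln 2, ln 3, and ln 3 − (2/3)·ln 2 respectively. -/

import Mathlib

/-- Symbols for paths in the Farey binary tree. -/
inductive LR
  | L
  | R
deriving DecidableEq

/-- One step in the Farey binary tree: update the current pair of fractions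
(represented as pairs (numerator, denominator) of naturals). -/
def fareyStep : ((ℕ × ℕ) × (ℕ × ℕ)) → LR → ((ℕ × ℕ) × (ℕ × ℕ))
  | ((a, b), (c, d)), LR.L => ((a, b), (a + c, b + d))
  | ((a, b), (c, d)), LR.R => ((a + c, b + d), (c, d))

/-- The final pair of fractions of a word: after reading the first symbol `L`
the current pair is (0/1, 1/1); the remaining symbols update it. -/
def finalPair (w : List LR) : (ℕ × ℕ) × (ℕ × ℕ) :=
  w.tail.foldl fareyStep ((0, 1), (1, 1))

/-- The value ⟨w⟩ of a word: the mediant of its final pair, as (numerator, denominator). -/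
def value (w : List LR) : ℕ × ℕ :=
  ((finalPair w).1.1 + (finalPair w).2.1, (finalPair w).1.2 + (finalPair w).2.2)

/-- A word over {L,R} is a Farey word when its first symbol is `L`. -/
def IsFareyWord (w : List LR) : Prop := w.head? = some LR.L

/-- Concatenation of degree sequences:
[a₁,…,a_s] ⊕ [b₁,…,b_t] = [a₁+1, a₂, …, a_{s−1}, a_s+b₁, b₂, …, b_{t−1}, b_t+1]. -/
def oplus (A B : List ℕ) : List ℕ :=
  (A.dropLast.modifyHead (· + 1)) ++ [A.getLastD 0 + B.headD 0] ++ B.tail.dropLast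
    ++ [B.getLastD 0 + 1]

/-- Update of the pair (D(left ancestor), D(right ancestor)) of unreduced degree
sequences along one symbol. -/
def degStep : (List ℕ × List ℕ) → LR → (List ℕ × List ℕ)
  | (A, B), LR.L => (A, oplus A B)
  | (A, B), LR.R => (oplus A B, B)

/-- The pair (D(a/b), D(c/d)) of unreduced degree sequences of the final pair of a word;
0/1 and 1/1 are both assigned the list [1,1]. -/
def degPair (w : List LR) : List ℕ × List ℕ :=
  w.tail.foldl degStep ([1, 1], [1, 1])

/-- The unreduced degree sequence D(⟨w⟩) = D(a/b) ⊕ D(c/d) of the value of a word. -/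
def Dseq (w : List LR) : List ℕ :=
  oplus (degPair w).1 (degPair w).2

/-- Reduction: [k₁,…,k_{q+1}] becomes [k₂,…,k_q, k₁+k_{q+1}]; the last entry is the
boundary degree and the remaining ones are the inner degrees. -/
def reduce (D : List ℕ) : List ℕ :=
  D.tail.dropLast ++ [D.headD 0 + D.getLastD 0]

/-- The reduced degree sequence of the Haros graph G_{⟨w⟩}. -/
def degSeq (w : List LR) : List ℕ := reduce (Dseq w)

/-- Degree-distribution entropy S of the Haros graph G_{⟨w⟩}:
S = −Σ_k P(k)·ln P(k), summed over the degree values occurring in the reduced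
degree sequence, where P(k) = m(k)/q. -/
noncomputable def Sent (w : List LR) : ℝ :=
  -∑ k ∈ (degSeq w).toFinset,
    (((degSeq w).count k : ℝ) / ((value w).2 : ℝ)) *
      Real.log (((degSeq w).count k : ℝ) / ((value w).2 : ℝ))

/-- Reduced entropy H of the Haros graph G_{⟨w⟩} (with the convention 0·ln 0 = 0,
automatic since Real.log 0 = 0). -/
noncomputable def Hent (w : List LR) : ℝ :=
  let x : ℝ := ((value w).1 : ℝ) / ((value w).2 : ℝ)
  if x ≤ 1 / 2 then
    Sent w + 2 * x * Real.log x + (1 - 2 * x) * Real.log (1 - 2 * x)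
  else
    Sent w + 2 * (1 - x) * Real.log (1 - x) + (2 * x - 1) * Real.log (2 * x - 1)

/-- The mediant of the pair of fractions obtained from `s` by reading `u`. -/
def mediantFrom (s : (ℕ × ℕ) × (ℕ × ℕ)) (u : List LR) : ℕ × ℕ :=
  ((u.foldl fareyStep s).1.1 + (u.foldl fareyStep s).2.1,
    (u.foldl fareyStep s).1.2 + (u.foldl fareyStep s).2.2)

theorem mediantFrom_between (u : List LR) : ∀ a b c d : ℕ, a * d < b * c →
    a * (mediantFrom ((a, b), (c, d)) u).2 < b * (mediantFrom ((a, b), (c, d)) u).1 ∧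
    d * (mediantFrom ((a, b), (c, d)) u).1 < c * (mediantFrom ((a, b), (c, d)) u).2 := by
  induction u with
  | nil =>
    intro a b c d h
    simp only [mediantFrom, List.foldl_nil]
    constructor <;> nlinarith
  | cons s u ih =>
    intro a b c d h
    cases s with
    | L =>
      have := ih a b (a + c) (b + d) (by nlinarith)
      simp only [mediantFrom, List.foldl_cons, fareyStep] at this ⊢
      constructor <;> nlinarith
    | R =>
      have := ih (a + c) (b + d) c d (by nlinarith)
      simp only [mediantFrom, List.foldl_cons, fareyStep] at this ⊢
      constructor <;> nlinarith

theorem mediantFrom_L_lt (u : List LR) {a b c d : ℕ} (h : a * d < b * c) :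
    (b + d) * (mediantFrom ((a, b), (c, d)) (LR.L :: u)).1 <
      (a + c) * (mediantFrom ((a, b), (c, d)) (LR.L :: u)).2 :=
  (mediantFrom_between u a b (a + c) (b + d) (by nlinarith)).2

theorem lt_mediantFrom_R (u : List LR) {a b c d : ℕ} (h : a * d < b * c) :
    (a + c) * (mediantFrom ((a, b), (c, d)) (LR.R :: u)).2 <
      (b + d) * (mediantFrom ((a, b), (c, d)) (LR.R :: u)).1 :=
  (mediantFrom_between u (a + c) (b + d) c d (by nlinarith)).1

theorem mediantFrom_injective (u : List LR) : ∀ (v : List LR) (a b c d : ℕ), a * d < b * c →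
    mediantFrom ((a, b), (c, d)) u = mediantFrom ((a, b), (c, d)) v → u = v := by
  have mediant_nil (a b c d : ℕ) : mediantFrom ((a, b), (c, d)) [] = (a + c, b + d) := rfl
  induction u with
  | nil =>
    intro v a b c d h e
    rcases v with _ | ⟨_ | _, v⟩
    · rfl
    · have := mediantFrom_L_lt v h
      rw [← e, mediant_nil] at this
      nlinarith
    · have := lt_mediantFrom_R v h
      rw [← e, mediant_nil] at this
      nlinarith
  | cons s u ih =>
    intro v a b c d h e
    rcases s with _ | _ <;> rcases v with _ | ⟨_ | _, v⟩
    · have := mediantFrom_L_lt u h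
      rw [e, mediant_nil] at this
      nlinarith
    · rw [ih v a b (a + c) (b + d) (by nlinarith) e]
    · have h₁ := mediantFrom_L_lt u h
      have h₂ := lt_mediantFrom_R v h
      rw [e] at h₁
      omega
    · have := lt_mediantFrom_R u h
      rw [e, mediant_nil] at this
      nlinarith
    · have h₁ := mediantFrom_L_lt v h
      have h₂ := lt_mediantFrom_R u h
      rw [e] at h₂
      omega
    · rw [ih v (a + c) (b + d) c d (by nlinarith) e]

/-- The Farey path of a fraction is unique. -/
theorem IsFareyWord.eq_of_value_eq {w w' : List LR} (hw : IsFareyWord w) (hw' : IsFareyWord w')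
    (h : value w = value w') : w = w' := by
  unfold IsFareyWord at hw hw'
  rcases w with _ | ⟨s, u⟩ <;> rcases w' with _ | ⟨s', u'⟩ <;>
    simp only [List.head?_nil, List.head?_cons, Option.some.injEq, reduceCtorEq] at hw hw'
  rw [hw, hw', mediantFrom_injective u u' 0 1 1 1 (by norm_num) h]

theorem foldl_fareyStep_replicate_L (m : ℕ) :
    (List.replicate m LR.L).foldl fareyStep ((0, 1), (1, 1)) = ((0, 1), (1, m + 1)) := by
  induction m with
  | zero => rfl
  | succ m ih =>
    rw [List.replicate_succ', List.foldl_append, ih]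
    simp [fareyStep, add_comm]

theorem oplus_cons_concat (a x b y : ℕ) (A B : List ℕ) :
    oplus (a :: (A ++ [x])) (b :: (B ++ [y])) =
      (a + 1) :: (A ++ (x + b) :: B ++ [y + 1]) := by
  have hA : (a :: (A ++ [x])).dropLast = a :: A := by
    rw [← List.cons_append, List.dropLast_concat]
  have hx : (a :: (A ++ [x])).getLastD 0 = x := by
    rw [← List.cons_append, List.getLastD_concat]
  have hy : (b :: (B ++ [y])).getLastD 0 = y := by
    rw [← List.cons_append, List.getLastD_concat]
  rw [oplus, hA, hx, hy]
  simp

theorem reduce_cons_concat (a x : ℕ) (A : List ℕ) :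
    reduce (a :: (A ++ [x])) = A ++ [a + x] := by
  have hx : (a :: (A ++ [x])).getLastD 0 = x := by
    rw [← List.cons_append, List.getLastD_concat]
  rw [reduce, hx]
  simp

theorem foldl_degStep_replicate_L (m : ℕ) :
    (List.replicate (m + 1) LR.L).foldl degStep ([1, 1], [1, 1]) =
      ([1, 1], 2 :: (List.replicate m 3 ++ [2] ++ [m + 2])) := by
  induction m with
  | zero => rfl
  | succ m ih =>
    have := oplus_cons_concat 1 1 2 (m + 2) [] (List.replicate m 3 ++ [2])
    simp only [List.nil_append] at this
    rw [List.replicate_succ', List.foldl_append, ih, List.foldl_cons, List.foldl_nil, degStep, this]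
    simp [List.replicate_succ, add_right_comm]

/-- The word `L^(m+2) R u`. -/
def turnWord (m : ℕ) (u : List LR) : List LR :=
  LR.L :: (List.replicate (m + 1) LR.L ++ LR.R :: u)

theorem isFareyWord_turnWord (m : ℕ) (u : List LR) : IsFareyWord (turnWord m u) := rfl

theorem finalPair_turnWord (m : ℕ) (u : List LR) :
    finalPair (turnWord m u) = u.foldl fareyStep ((1, m + 3), (1, m + 2)) := by
  simp [finalPair, turnWord, List.foldl_append, foldl_fareyStep_replicate_L, fareyStep]
  congr 3
  omega

theorem degPair_turnWord (m : ℕ) (u : List LR) :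
    degPair (turnWord m u) = u.foldl degStep
      (2 :: (List.replicate (m + 1) 3 ++ [2] ++ [m + 3]),
        2 :: (List.replicate m 3 ++ [2] ++ [m + 2])) := by
  have := oplus_cons_concat 1 1 2 (m + 2) [] (List.replicate m 3 ++ [2])
  simp only [List.nil_append] at this
  rw [degPair, turnWord, List.tail_cons, List.foldl_append, foldl_degStep_replicate_L,
    List.foldl_cons, degStep, this]
  simp [List.replicate_succ]

theorem degSeq_turnWord_nil (m : ℕ) :
    degSeq (turnWord m []) =
      List.replicate (m + 1) 3 ++ [2] ++ [m + 5] ++ List.replicate m 3 ++ [2] ++ [m + 6] := by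
  rw [degSeq, Dseq, degPair_turnWord, List.foldl_nil, oplus_cons_concat, reduce_cons_concat]
  simp
  omega

theorem degSeq_turnWord_L (m : ℕ) :
    degSeq (turnWord m [LR.L]) =
      List.replicate (m + 1) 3 ++ [2] ++ [m + 6] ++ List.replicate (m + 1) 3 ++ [2] ++ [m + 5] ++
        List.replicate m 3 ++ [2] ++ [m + 7] := by
  rw [degSeq, Dseq, degPair_turnWord]
  simp only [List.foldl_cons, List.foldl_nil, degStep]
  rw [oplus_cons_concat, oplus_cons_concat, reduce_cons_concat]
  simp
  omega

theorem degSeq_turnWord_R (m : ℕ) :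
    degSeq (turnWord m [LR.R]) =
      List.replicate (m + 1) 3 ++ [2] ++ [m + 5] ++ List.replicate m 3 ++ [2] ++ [m + 5] ++
        List.replicate m 3 ++ [2] ++ [m + 7] := by
  rw [degSeq, Dseq, degPair_turnWord]
  simp only [List.foldl_cons, List.foldl_nil, degStep]
  rw [oplus_cons_concat, oplus_cons_concat, reduce_cons_concat]
  simp
  omega

/-- The normalisations by `q` cancel in the reduced entropy on the branch `p / q < 1 / 2`. -/
theorem Hent_of_value {w : List LR} {p q : ℕ} (hv : value w = (p, q)) (hp : 0 < p)
    (hq : 2 * p < q) (hlen : (degSeq w).length = q) :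
    Hent w = (2 * p * Real.log p + (q - 2 * p : ℝ) * Real.log (q - 2 * p)
      - ∑ k ∈ (degSeq w).toFinset,
        ((degSeq w).count k : ℝ) * Real.log ((degSeq w).count k)) / q := by
  have hp' : (0 : ℝ) < p := by exact_mod_cast hp
  have hq' : (2 * p : ℝ) < q := by exact_mod_cast hq
  have hq₀ : (0 : ℝ) < q := by linarith
  have hcount : ∑ k ∈ (degSeq w).toFinset, ((degSeq w).count k : ℝ) = q := by
    rw [← hlen]
    exact_mod_cast List.sum_toFinset_count_eq_length (degSeq w)
  have hS : Sent w = Real.log q - (∑ k ∈ (degSeq w).toFinset,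
      ((degSeq w).count k : ℝ) * Real.log ((degSeq w).count k)) / q := by
    have hterm : ∀ k ∈ (degSeq w).toFinset,
        ((degSeq w).count k : ℝ) / q * Real.log ((degSeq w).count k / q) =
          (degSeq w).count k * Real.log ((degSeq w).count k) / q -
            (degSeq w).count k * (Real.log q / q) := by
      intro k hk
      have hk' : ((degSeq w).count k : ℝ) ≠ 0 := by
        exact_mod_cast (List.count_pos_iff.2 (List.mem_toFinset.1 hk)).ne'
      rw [Real.log_div hk' hq₀.ne']
      ring
    rw [Sent, hv, Finset.sum_congr rfl hterm, Finset.sum_sub_distrib, ← Finset.sum_mul,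
      ← Finset.sum_div, hcount]
    field_simp
    ring
  have hx : (p : ℝ) / q ≤ 1 / 2 := by
    rw [div_le_div_iff₀ hq₀ two_pos]
    linarith
  have hy : 1 - 2 * ((p : ℝ) / q) = (q - 2 * p) / q := by
    field_simp
  simp only [Hent, hv]
  rw [if_pos hx, hS, hy, Real.log_div hp'.ne' hq₀.ne', Real.log_div (by linarith) hq₀.ne']
  field_simp
  ring

/-- for every integer n ≥ 2 the reduced entropies of the Haros graphs of
the rational families 2/(2n+1), 3/(3n+2), 3/(3n+1) satisfy
H(2/(2n+1)) = (2/(2n+1))·ln 2, H(3/(3n+2)) = (3/(3n+2))·ln 3 and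
H(3/(3n+1)) = (3/(3n+1))·(ln 3 − (2/3)·ln 2); each family lies on a line H(x) = a·x. -/
theorem statement16 (n : ℕ) (hn : 2 ≤ n)
    (w1 w2 w3 : List LR)
    (hw1 : IsFareyWord w1) (hw2 : IsFareyWord w2) (hw3 : IsFareyWord w3)
    (hv1 : value w1 = (2, 2 * n + 1)) (hv2 : value w2 = (3, 3 * n + 2))
    (hv3 : value w3 = (3, 3 * n + 1)) :
    Hent w1 = (2 / (2 * (n : ℝ) + 1)) * Real.log 2 ∧
    Hent w2 = (3 / (3 * (n : ℝ) + 2)) * Real.log 3 ∧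
    Hent w3 = (3 / (3 * (n : ℝ) + 1)) * (Real.log 3 - (2 / 3) * Real.log 2) := by
  obtain ⟨m, rfl⟩ := Nat.exists_eq_add_of_le' hn
  have e1 : w1 = turnWord m [] := by
    refine hw1.eq_of_value_eq (isFareyWord_turnWord m _) (hv1.trans ?_)
    simp only [value, finalPair_turnWord, List.foldl_nil, Prod.mk.injEq, true_and]
    omega
  have e2 : w2 = turnWord m [LR.L] := by
    refine hw2.eq_of_value_eq (isFareyWord_turnWord m _) (hv2.trans ?_)
    simp only [value, finalPair_turnWord, List.foldl_cons, List.foldl_nil, fareyStep,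
      Prod.mk.injEq, true_and]
    omega
  have e3 : w3 = turnWord m [LR.R] := by
    refine hw3.eq_of_value_eq (isFareyWord_turnWord m _) (hv3.trans ?_)
    simp only [value, finalPair_turnWord, List.foldl_cons, List.foldl_nil, fareyStep,
      Prod.mk.injEq, true_and]
    omega
  refine ⟨?_, ?_, ?_⟩
  · have hd := degSeq_turnWord_nil m
    rw [← e1] at hd
    have hs : (degSeq w1).toFinset = {2, 3, m + 5, m + 6} := by
      rw [hd]; ext k; simp; grind
    rw [Hent_of_value hv1 (by omega) (by omega) (by simp [hd]; omega), hs]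
    have h2 : (degSeq w1).count 2 = 2 := by simp [hd, List.count_replicate]
    have h3 : (degSeq w1).count 3 = 2 * m + 1 := by simp [hd]; ring
    have h4 : (degSeq w1).count (m + 5) = 1 := by simp [hd, List.count_replicate]
    have h5 : (degSeq w1).count (m + 6) = 1 := by simp [hd, List.count_replicate]
    rw [Finset.sum_insert (by simp), Finset.sum_insert (by simp), Finset.sum_insert (by simp),
      Finset.sum_singleton, h2, h3, h4, h5]
    push_cast
    rw [show (2 * ((m : ℝ) + 2) + 1 - 2 * 2) = 2 * m + 1 by ring, Real.log_one]
    ring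
  · have hd := degSeq_turnWord_L m
    rw [← e2] at hd
    have hs : (degSeq w2).toFinset = {2, 3, m + 5, m + 6, m + 7} := by
      rw [hd]; ext k; simp; grind
    rw [Hent_of_value hv2 (by omega) (by omega) (by simp [hd]; omega), hs]
    have h2 : (degSeq w2).count 2 = 3 := by simp [hd, List.count_replicate]
    have h3 : (degSeq w2).count 3 = 3 * m + 2 := by simp [hd]; ring
    have h4 : (degSeq w2).count (m + 5) = 1 := by simp [hd, List.count_replicate]
    have h5 : (degSeq w2).count (m + 6) = 1 := by simp [hd, List.count_replicate]
    have h6 : (degSeq w2).count (m + 7) = 1 := by simp [hd, List.count_replicate]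
    rw [Finset.sum_insert (by simp), Finset.sum_insert (by simp), Finset.sum_insert (by simp),
      Finset.sum_insert (by simp), Finset.sum_singleton, h2, h3, h4, h5, h6]
    push_cast
    rw [show (3 * ((m : ℝ) + 2) + 2 - 2 * 3) = 3 * m + 2 by ring, Real.log_one]
    ring
  · have hd := degSeq_turnWord_R m
    rw [← e3] at hd
    have hs : (degSeq w3).toFinset = {2, 3, m + 5, m + 7} := by
      rw [hd]; ext k; simp; grind
    rw [Hent_of_value hv3 (by omega) (by omega) (by simp [hd]; omega), hs]
    have h2 : (degSeq w3).count 2 = 3 := by simp [hd, List.count_replicate]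
    have h3 : (degSeq w3).count 3 = 3 * m + 1 := by simp [hd]; ring
    have h4 : (degSeq w3).count (m + 5) = 2 := by simp [hd, List.count_replicate]
    have h5 : (degSeq w3).count (m + 7) = 1 := by simp [hd, List.count_replicate]
    rw [Finset.sum_insert (by simp), Finset.sum_insert (by simp), Finset.sum_insert (by simp),
      Finset.sum_singleton, h2, h3, h4, h5]
    push_cast
    rw [show (3 * ((m : ℝ) + 2) + 1 - 2 * 3) = 3 * m + 1 by ring, Real.log_one]
    ring
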